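/- Let l₁ ≥ 2 be a square-free integer, D a nonzero integer, and T, Λ ≥ 2 real numbers. Suppose all solutions (t, m) ∈ ℤ_{>0} × ℤ_{>0} of t² − 4·l₁·m² = D with t ≤ T and m ≤ Λ are considered. Writing each solution as the algebraic number (t + 2m√l₁)/2 in the real quadratic field ℚ(√l₁), any two solutions with the same value of D differ multiplicatively by a unit of ℤ[√l₁]·(powers of the fundamental unit); since the fundamental unit ε of ℚ(√l₁) satisfies ε ≥ (1+√5)/2, the number of solutions (t,m) with √D-norm fixed and t + 2m√l₁ ≤ 4TΛ is at most C·log(TΛ)·d(|D|) for an absolute constant C. -/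

import Mathlib

/-!
Put `k = 4 l₁`, so that a solution `(t, m)` is an element `x = t + m√k` of `ℤ√k` of norm `D`. If
two solutions `x, y` generate the same ideal, `x / y` is a unit of the maximal order, so its trace
`2 re(x ȳ) / D` is an integer `e`. Hence `x / y + y / x = e`, where `e ≥ 3` as soon as `x > y > 0`
in `ℝ`: inside one class, distinct solutions are at least a factor `2` apart, and a box contains
only logarithmically many of them.

To count the classes one prime `p` at a time, suppose first that `k = r²` with `r ∈ ℤ_p`. The
`p`-adic valuation of `t + m r` then takes at most `v_p(D) + 1` values on solutions, and if it is
the same for `x` and `y`, then `2 re(x ȳ) / D` is `p`-integral. If `k` is not a square in `ℤ_p`, all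
solutions agree at `p`: from `re(x ȳ)² - k im(x ȳ)² = D²` and Hensel's lemma, a trace that fails to
be `p`-integral would produce a square root of `k`. The product over `p` of the numbers
`v_p(D) + 1` is `d(|D|)`.
-/

open Zsqrtd hiding norm_mul
open Real

section Conjugation

variable {R : Type*} [CommRing R] {k : ℤ} (r : {r : R // r * r = k}) (x y : ℤ√k)

theorem lift_mul_lift_star : lift r x * lift r (star x) = x.norm := by
  rw [← map_mul, ← norm_eq_mul_conj, map_intCast]

theorem lift_add_lift_star : lift r x + lift r (star x) = (2 * x.re : ℤ) := by
  simp only [lift_apply_apply, re_star, im_star]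
  push_cast
  ring

theorem lift_mul_star_add_star_mul :
    lift r x * lift r (star y) + lift r y * lift r (star x) = (2 * (x * star y).re : ℤ) := by
  rw [← lift_add_lift_star r, star_mul, star_star, map_mul, map_mul]

variable {r x y} in
theorem eq_of_norm_eq_of_lift_eq [IsDomain R] [CharZero R] (hk : k ≠ 0) (hx : x.norm ≠ 0)
    (hnorm : x.norm = y.norm) (h : lift r x = lift r y) : x = y := by
  have hx' : lift r x ≠ 0 :=
    left_ne_zero_of_mul (lift_mul_lift_star r x ▸ Int.cast_ne_zero.mpr hx)
  have hstar : lift r (star x) = lift r (star y) := by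
    apply mul_left_cancel₀ hx'
    rw [lift_mul_lift_star, hnorm, h, lift_mul_lift_star]
  have hre : x.re = y.re := by
    have := lift_add_lift_star r x
    rw [h, hstar, lift_add_lift_star, Int.cast_inj] at this
    lia
  have hr : r.1 ≠ 0 := left_ne_zero_of_mul (r.2 ▸ Int.cast_ne_zero.mpr hk)
  simpa [Zsqrtd.ext_iff, hre, hr] using h

end Conjugation

/-- Two elements of `ℤ√k` of the same norm whose quotient `x / y = x ȳ / N(y)` has integral trace.
As this quotient has norm `1`, it is then a unit of the maximal order (for `k` not a square), so the
classes are the orbits under units. Phrasing the relation through the trace keeps it inside `ℤ√k`,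
which need not be the maximal order. -/
def UnitRelated {k : ℤ} (x y : ℤ√k) : Prop :=
  x.norm = y.norm ∧ x.norm ∣ 2 * (x * star y).re

section Padic

theorem isSquare_of_isSquare_mul_sq {R : Type*} [CommRing R] [IsDomain R] [IsIntegrallyClosed R]
    {a b : R} (hb : b ≠ 0) (h : IsSquare (a * b ^ 2)) : IsSquare a := by
  obtain ⟨z, hz⟩ := h.exists_sq
  obtain ⟨c, rfl⟩ : b ∣ z :=
    (IsIntegrallyClosed.pow_dvd_pow_iff two_ne_zero).mp (hz ▸ dvd_mul_left _ _)
  have : a = c ^ 2 := mul_right_cancel₀ (pow_ne_zero 2 hb) (by rw [hz]; ring)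
  exact this ▸ IsSquare.sq c

theorem norm_two_mul_re_le_of_norm_lift_eq {R : Type*} [NormedCommRing R] [NormMulClass R]
    [IsUltrametricDist R] {k : ℤ} {r : {r : R // r * r = k}} {x y : ℤ√k}
    (hnorm : x.norm = y.norm) (h : ‖lift r x‖ = ‖lift r y‖) :
    ‖((2 * (x * star y).re : ℤ) : R)‖ ≤ ‖(x.norm : R)‖ := by
  rw [← lift_mul_star_add_star_mul r]
  refine (IsUltrametricDist.norm_add_le_max _ _).trans (max_le (le_of_eq ?_) (le_of_eq ?_))
  · rw [norm_mul, h, ← norm_mul, lift_mul_lift_star, hnorm]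
  · rw [norm_mul, ← h, ← norm_mul, lift_mul_lift_star]

variable {p : ℕ} [Fact p.Prime] {k : ℤ}

theorem isSquare_of_norm_sq_sub_lt {a b : ℤ_[p]} (h : ‖a ^ 2 - b‖ < ‖2 * a‖ ^ 2) : IsSquare b := by
  obtain ⟨z, hz, -⟩ := hensels_lemma (F := (.X ^ 2 - .C b : Polynomial ℤ_[p])) (a := a)
    (by simpa [one_add_one_eq_two] using h)
  exact ⟨z, by simpa [sub_eq_zero, eq_comm, sq] using hz⟩

theorem norm_two_mul_re_le_of_not_isSquare (hk : ¬IsSquare (k : ℤ_[p])) {w : ℤ√k} {D : ℤ}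
    (hw : w.norm = D ^ 2) : ‖((2 * w.re : ℤ) : ℤ_[p])‖ ≤ ‖(D : ℤ_[p])‖ := by
  rcases eq_or_ne w.im 0 with him | him
  · have hre : w.re ^ 2 = D ^ 2 := by rw [← hw, norm_def, him]; ring
    have hnorm : ‖(w.re : ℤ_[p])‖ = ‖(D : ℤ_[p])‖ := by
      rcases sq_eq_sq_iff_eq_or_eq_neg.mp hre with h | h <;> simp [h]
    rw [Int.cast_mul, norm_mul, hnorm]
    exact mul_le_of_le_one_left (norm_nonneg _) (PadicInt.norm_le_one _)
  · by_contra! hlt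
    have hsub : (w.re : ℤ_[p]) ^ 2 - k * w.im ^ 2 = D ^ 2 := by
      rw [norm_def] at hw
      exact_mod_cast show w.re ^ 2 - k * w.im ^ 2 = D ^ 2 by linear_combination hw
    refine hk (isSquare_of_isSquare_mul_sq (Int.cast_ne_zero.mpr him)
      (isSquare_of_norm_sq_sub_lt (a := w.re) ?_))
    rw [hsub, norm_pow]
    push_cast at hlt
    gcongr

theorem valuation_lift_le_padicValInt_norm (r : {r : ℤ_[p] // r * r = k}) {x : ℤ√k}
    (hx : x.norm ≠ 0) : (lift r x).valuation ≤ padicValInt p x.norm := by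
  have hmul := lift_mul_lift_star r x
  have hne : lift r x * lift r (star x) ≠ 0 := hmul ▸ Int.cast_ne_zero.mpr hx
  have hval : (x.norm : ℤ_[p]).valuation = padicValInt p x.norm := by
    rw [← Nat.cast_inj (R := ℤ), ← PadicInt.valuation_coe, PadicInt.coe_intCast,
      Padic.valuation_intCast]
  rw [← hval, ← hmul,
    PadicInt.valuation_mul (left_ne_zero_of_mul hne) (right_ne_zero_of_mul hne)]
  exact Nat.le_add_right _ _

variable (p k) in
theorem exists_padic_invariant :
    ∃ v : ℤ√k → ℕ, ∀ x : ℤ√k, x.norm ≠ 0 → v x ≤ padicValInt p x.norm ∧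
      ∀ y : ℤ√k, x.norm = y.norm → v x = v y →
        ‖((2 * (x * star y).re : ℤ) : ℤ_[p])‖ ≤ ‖(x.norm : ℤ_[p])‖ := by
  by_cases hk : IsSquare (k : ℤ_[p])
  · obtain ⟨r₀, hr₀⟩ := hk
    let r : {r : ℤ_[p] // r * r = k} := ⟨r₀, hr₀.symm⟩
    have lift_ne {x : ℤ√k} (hx : x.norm ≠ 0) : lift r x ≠ 0 :=
      left_ne_zero_of_mul (lift_mul_lift_star r x ▸ Int.cast_ne_zero.mpr hx)
    refine ⟨fun x => (lift r x).valuation, fun x hx =>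
      ⟨valuation_lift_le_padicValInt_norm r hx, fun y hxy (hv : _ = (lift r y).valuation) => ?_⟩⟩
    refine norm_two_mul_re_le_of_norm_lift_eq (r := r) hxy ?_
    rw [PadicInt.norm_eq_zpow_neg_valuation (lift_ne hx),
      PadicInt.norm_eq_zpow_neg_valuation (lift_ne (hxy ▸ hx)), ← hv]
  · refine ⟨0, fun x _ => ⟨Nat.zero_le _, fun y hxy _ => ?_⟩⟩
    exact norm_two_mul_re_le_of_not_isSquare hk (by rw [Zsqrtd.norm_mul, norm_conj, ← hxy, sq])

end Padic

theorem dvd_of_forall_padicInt_norm_le {a b : ℤ}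
    (h : ∀ (p : ℕ) [Fact p.Prime], ‖(b : ℤ_[p])‖ ≤ ‖(a : ℤ_[p])‖) : a ∣ b := by
  rw [← Int.natAbs_dvd_natAbs, Nat.dvd_iff_prime_pow_dvd_dvd]
  intro p n hp hdvd
  have := Fact.mk hp
  rw [← Int.natCast_dvd, Nat.cast_pow, ← PadicInt.norm_int_le_pow_iff_dvd] at hdvd ⊢
  exact (h p).trans hdvd

theorem prod_primeFactors_pow_dvd {n : ℕ} (hn : n ≠ 0) {e : ℕ → ℕ}
    (he : ∀ p, p.Prime → e p ≤ n.factorization p) : ∏ p ∈ n.primeFactors, p ^ e p ∣ n := by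
  conv_rhs => rw [← Nat.prod_factorization_pow_eq_self hn]
  exact Finset.prod_dvd_prod_of_dvd _ _ fun p hp =>
    pow_dvd_pow p (he p (Nat.prime_of_mem_primeFactors hp))

theorem factorization_prod_primeFactors_pow {n : ℕ} {e : ℕ → ℕ}
    (he : ∀ p, p.Prime → e p ≤ n.factorization p) {p : ℕ} (hp : p.Prime) :
    (∏ q ∈ n.primeFactors, q ^ e q).factorization p = e p := by
  have hprime {q : ℕ} (hq : q ∈ n.primeFactors) : q.Prime := Nat.prime_of_mem_primeFactors hq
  have hsupp : p ∉ n.primeFactors → e p = 0 := fun hmem =>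
    Nat.eq_zero_of_le_zero ((he p hp).trans_eq (Finsupp.notMem_support_iff.mp hmem))
  rw [Nat.factorization_prod fun q hq => pow_ne_zero _ (hprime hq).ne_zero,
    Finset.sum_congr rfl fun q hq => (hprime hq).factorization_pow, Finsupp.finsetSum_apply]
  simpa [Finsupp.single_apply, eq_comm] using hsupp

/-- The class of `x` is recorded as the divisor `∏ p ^ v_p(x)` of `|D|`, with `v_p` the invariant at
`p`: a stand-in for the ideal generated by `x`. -/
theorem exists_unitRelated_classifier (k : ℤ) {D : ℤ} (hD : D ≠ 0) :
    ∃ c : ℤ√k → ℕ, ∀ x : ℤ√k, x.norm = D → c x ∈ D.natAbs.divisors ∧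
      ∀ y : ℤ√k, y.norm = D → c x = c y → UnitRelated x y := by
  have hD' : D.natAbs ≠ 0 := Int.natAbs_ne_zero.mpr hD
  choose! v hv using fun (p : ℕ) (hp : p.Prime) =>
    haveI := Fact.mk hp
    exists_padic_invariant p k
  have hle {x : ℤ√k} (hx : x.norm = D) (p : ℕ) (hp : p.Prime) :
      v p x ≤ D.natAbs.factorization p := by
    rw [Nat.factorization_def _ hp]
    exact hx ▸ (hv p hp x (hx ▸ hD)).1
  refine ⟨fun x => ∏ p ∈ D.natAbs.primeFactors, p ^ v p x, fun x hx => ⟨?_, fun y hy hxy => ?_⟩⟩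
  · exact Nat.mem_divisors.mpr ⟨prod_primeFactors_pow_dvd hD' (hle hx), hD'⟩
  · have hnorm : x.norm = y.norm := hx.trans hy.symm
    refine ⟨hnorm, dvd_of_forall_padicInt_norm_le fun p hp => ?_⟩
    refine (hv p hp.out x (hx ▸ hD)).2 y hnorm ?_
    rw [← factorization_prod_primeFactors_pow (hle hx) hp.out,
      ← factorization_prod_primeFactors_pow (hle hy) hp.out]
    exact congrArg (fun n : ℕ => n.factorization p) hxy

theorem card_le_floor_logb_add_one {b a N : ℝ} (hb : 1 < b) (ha : 0 < a) {S : Finset ℝ}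
    (hS : ∀ x ∈ S, a ≤ x ∧ x ≤ a * N) (hgap : ∀ x ∈ S, ∀ y ∈ S, x < y → b * x ≤ y) :
    S.card ≤ ⌊logb b N⌋₊ + 1 := by
  have one_le {x : ℝ} (hx : x ∈ S) : 1 ≤ x / a := (one_le_div₀ ha).mpr (hS x hx).1
  rw [← Finset.card_range (⌊logb b N⌋₊ + 1)]
  refine Finset.card_le_card_of_injOn (fun x => ⌊logb b (x / a)⌋₊) (fun x hx => ?_)
    (StrictMonoOn.injOn fun x hx y hy hxy => ?_)
  · have hxN : x / a ≤ N := (div_le_iff₀' ha).mpr (hS x hx).2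
    simp only [Finset.coe_range, Set.mem_Iio, Nat.lt_succ_iff]
    exact Nat.floor_le_floor
      (logb_le_logb_of_le hb (zero_lt_one.trans_le (one_le hx)) hxN)
  · have hpos : 0 < x / a := zero_lt_one.trans_le (one_le hx)
    have hlog : logb b (x / a) + 1 ≤ logb b (y / a) := by
      rw [← logb_self_eq_one hb, ← logb_mul hpos.ne' (by positivity)]
      refine logb_le_logb_of_le hb (by positivity) ?_
      rw [div_mul_eq_mul_div, mul_comm]
      gcongr
      exact hgap x hx y hy hxy
    have := Nat.floor_le_floor hlog
    rwa [Nat.floor_add_one (logb_nonneg hb (one_le hx)), Nat.succ_le_iff] at this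

theorem two_mul_le_of_sq_add_sq_eq {X Y : ℝ} {e : ℤ} (hY : 0 < Y) (hlt : Y < X)
    (h : X ^ 2 + Y ^ 2 = e * (X * Y)) : 2 * Y ≤ X := by
  have hXY : 0 < X * Y := mul_pos (hY.trans hlt) hY
  have he : 2 < e := by
    have : 2 * (X * Y) < e * (X * Y) := by nlinarith [sq_pos_of_pos (sub_pos.mpr hlt)]
    exact_mod_cast lt_of_mul_lt_mul_right this hXY.le
  have he' : (3 : ℝ) ≤ e := by exact_mod_cast he
  by_contra! h2
  nlinarith [mul_le_mul_of_nonneg_right he' hXY.le,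
    mul_pos (sub_pos.mpr hlt) (sub_pos.mpr h2)]

theorem UnitRelated.two_mul_lift_le {k : ℤ} {r : {r : ℝ // r * r = k}} {x y : ℤ√k}
    (hxy : UnitRelated x y) (hx : x.norm ≠ 0) (hpos : 0 < lift r y)
    (hlt : lift r y < lift r x) : 2 * lift r y ≤ lift r x := by
  obtain ⟨hnorm, e, he⟩ := hxy
  refine two_mul_le_of_sq_add_sq_eq (e := e) hpos hlt ?_
  have htrace := lift_mul_star_add_star_mul r x y
  rw [he, Int.cast_mul] at htrace
  have hX := lift_mul_lift_star r x
  have hY := lift_mul_lift_star r y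
  rw [← hnorm] at hY
  apply mul_left_cancel₀ (Int.cast_ne_zero (α := ℝ).mpr hx)
  linear_combination lift r x * lift r y * htrace - lift r x ^ 2 * hY - lift r y ^ 2 * hX

theorem card_le_of_pairwise_unitRelated {k : ℤ} (hk : 0 < k) {N : ℝ} {S : Finset (ℤ√k)}
    (hS : ∀ x ∈ S, 0 < x.re ∧ 0 < x.im ∧ x.norm ≠ 0 ∧ (x.re * x.im : ℝ) ≤ N)
    (hrel : ∀ x ∈ S, ∀ y ∈ S, UnitRelated x y) : S.card ≤ ⌊logb 2 N⌋₊ + 1 := by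
  have hkR : (0 : ℝ) < k := Int.cast_pos.mpr hk
  let r : {r : ℝ // r * r = k} := ⟨√k, mul_self_sqrt hkR.le⟩
  have hr : 0 < r.1 := sqrt_pos.mpr hkR
  have hbounds {x : ℤ√k} (hx : x ∈ S) :
      1 + r.1 ≤ lift r x ∧ lift r x ≤ (1 + r.1) * N := by
    obtain ⟨hre, him, -, hN⟩ := hS x hx
    have hre' : (1 : ℝ) ≤ x.re := by exact_mod_cast hre
    have him' : (1 : ℝ) ≤ x.im := by exact_mod_cast him
    rw [lift_apply_apply]
    constructor
    · exact add_le_add hre' (le_mul_of_one_le_left hr.le him')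
    · calc (x.re + x.im * r.1 : ℝ) ≤ x.re * x.im + x.re * x.im * r.1 := by
            gcongr
            · exact le_mul_of_one_le_right (by positivity) him'
            · exact le_mul_of_one_le_left (by positivity) hre'
        _ = (1 + r.1) * (x.re * x.im) := by ring
        _ ≤ (1 + r.1) * N := by gcongr
  have hinj : Set.InjOn (lift r) S := fun x hx y hy h =>
    eq_of_norm_eq_of_lift_eq hk.ne' (hS x hx).2.2.1 (hrel x hx y hy).1 h
  rw [← Finset.card_image_of_injOn hinj]
  refine card_le_floor_logb_add_one one_lt_two (add_pos one_pos hr)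
    (Finset.forall_mem_image.mpr fun x hx => hbounds hx) ?_
  simp only [Finset.forall_mem_image]
  exact fun y hy x hx hlt => (hrel x hx y hy).two_mul_lift_le (hS x hx).2.2.1
    ((add_pos one_pos hr).trans_le (hbounds hy).1) hlt

theorem card_le_of_norm_eq {k D : ℤ} (hk : 0 < k) (hD : D ≠ 0) {N : ℝ} {S : Finset (ℤ√k)}
    (hS : ∀ x ∈ S, 0 < x.re ∧ 0 < x.im ∧ x.norm = D ∧ (x.re * x.im : ℝ) ≤ N) :
    S.card ≤ (⌊logb 2 N⌋₊ + 1) * D.natAbs.divisors.card := by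
  obtain ⟨c, hc⟩ := exists_unitRelated_classifier k hD
  refine Finset.card_le_mul_card_image_of_maps_to (f := c)
    (fun x hx => (hc x (hS x hx).2.2.1).1) _ fun d _ => ?_
  refine card_le_of_pairwise_unitRelated hk (fun x hx => ?_) fun x hx y hy => ?_
  · obtain ⟨hre, him, hnorm, hN⟩ := hS x (Finset.mem_filter.mp hx).1
    exact ⟨hre, him, hnorm ▸ hD, hN⟩
  · obtain ⟨hx, hxd⟩ := Finset.mem_filter.mp hx
    obtain ⟨hy, hyd⟩ := Finset.mem_filter.mp hy
    exact (hc x (hS x hx).2.2.1).2 y (hS y hy).2.2.1 (hxd.trans hyd.symm)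

theorem floor_logb_two_add_one_le {N : ℝ} (hN : 2 ≤ N) :
    (⌊logb 2 N⌋₊ + 1 : ℝ) ≤ 2 / log 2 * log N := by
  have hlogb : 1 ≤ logb 2 N :=
    (le_logb_iff_rpow_le one_lt_two (by linarith)).mpr (by rwa [rpow_one])
  calc (⌊logb 2 N⌋₊ + 1 : ℝ) ≤ logb 2 N + logb 2 N := by
        gcongr
        exact Nat.floor_le (zero_le_one.trans hlogb)
    _ = 2 / log 2 * log N := by rw [logb]; ring

theorem pell_solution_count_general {k D : ℤ} {T Λ : ℝ} (hk : 0 < k) (hD : D ≠ 0)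
    (hTΛ : 2 ≤ T * Λ) :
    ({p : ℤ × ℤ | 0 < p.1 ∧ 0 < p.2 ∧ p.1 ^ 2 - k * p.2 ^ 2 = D ∧
        (p.1 : ℝ) ≤ T ∧ (p.2 : ℝ) ≤ Λ}).Finite ∧
    (({p : ℤ × ℤ | 0 < p.1 ∧ 0 < p.2 ∧ p.1 ^ 2 - k * p.2 ^ 2 = D ∧
        (p.1 : ℝ) ≤ T ∧ (p.2 : ℝ) ≤ Λ}).ncard : ℝ)
      ≤ 2 / log 2 * log (T * Λ) * (Nat.divisors D.natAbs).card := by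
  set P : Set (ℤ × ℤ) := {p : ℤ × ℤ | 0 < p.1 ∧ 0 < p.2 ∧ p.1 ^ 2 - k * p.2 ^ 2 = D ∧
    (p.1 : ℝ) ≤ T ∧ (p.2 : ℝ) ≤ Λ}
  have hfin : P.Finite :=
    (Set.finite_Icc ((0, 0) : ℤ × ℤ) (⌊T⌋, ⌊Λ⌋)).subset fun p ⟨ht, hm, _, hT, hΛ⟩ =>
      ⟨⟨ht.le, hm.le⟩, ⟨Int.le_floor.mpr hT, Int.le_floor.mpr hΛ⟩⟩
  refine ⟨hfin, ?_⟩
  let toZsqrtd (p : ℤ × ℤ) : ℤ√k := ⟨p.1, p.2⟩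
  have hinj : Function.Injective toZsqrtd := fun p q h =>
    Prod.ext (congrArg Zsqrtd.re h) (congrArg Zsqrtd.im h)
  have hcard := card_le_of_norm_eq (N := T * Λ) (S := hfin.toFinset.image toZsqrtd) hk hD <|
    Finset.forall_mem_image.mpr fun p hp => by
      obtain ⟨ht, hm, hnorm, hT, hΛ⟩ := hfin.mem_toFinset.mp hp
      refine ⟨ht, hm, by rw [norm_def, ← hnorm]; ring, ?_⟩
      have : (0 : ℝ) < p.1 := Int.cast_pos.mpr ht
      have : (0 : ℝ) < p.2 := Int.cast_pos.mpr hm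
      exact mul_le_mul hT hΛ (by positivity) (by linarith)
  rw [Finset.card_image_of_injective _ hinj, ← Set.ncard_eq_toFinset_card P hfin] at hcard
  calc (P.ncard : ℝ) ≤ (⌊logb 2 (T * Λ)⌋₊ + 1) * D.natAbs.divisors.card := by
        exact_mod_cast hcard
    _ ≤ 2 / log 2 * log (T * Λ) * D.natAbs.divisors.card := by
        gcongr
        exact floor_logb_two_add_one_le hTΛ

theorem pell_solution_count :
    ∃ C : ℝ, 0 < C ∧
      ∀ (l₁ : ℤ) (D : ℤ) (T Λ : ℝ),
        2 ≤ l₁ → Squarefree l₁ → D ≠ 0 → 2 ≤ T → 2 ≤ Λ →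
        ({p : ℤ × ℤ | 0 < p.1 ∧ 0 < p.2 ∧ p.1 ^ 2 - 4 * l₁ * p.2 ^ 2 = D ∧
            (p.1 : ℝ) ≤ T ∧ (p.2 : ℝ) ≤ Λ}).Finite ∧
        (({p : ℤ × ℤ | 0 < p.1 ∧ 0 < p.2 ∧ p.1 ^ 2 - 4 * l₁ * p.2 ^ 2 = D ∧
            (p.1 : ℝ) ≤ T ∧ (p.2 : ℝ) ≤ Λ}).ncard : ℝ)
          ≤ C * Real.log (T * Λ) * (Nat.divisors D.natAbs).card :=
  ⟨2 / log 2, by positivity, fun _ _ _ _ hl _ hD hT hΛ =>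
    pell_solution_count_general (by linarith) hD (by nlinarith)⟩
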